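/- Let U, U' ⊆ ℂ be open and let g : U → U' be holomorphic with nowhere-vanishing derivative g'. Let h, v : U' → ℂ be smooth, and define on U the transformed quantities h̃ = (h∘g)·(g')² + S(g) and ṽ = (v∘g)/g', where S(g) = g'''/g' − (3/2)·(g''/g')² is the Schwarzian derivative of the holomorphic map g. Then D_{h̃} ṽ = ((D_h v)∘g)·(g')² on U; i.e., the operator D_h maps vector-field coefficients to quadratic-differential coefficients compatibly with holomorphic coordinate changes, provided h transforms as a projective connection. -/

import Mathlib

/-!
Put `η = g'' / g'`, so that `S(g) = η' - η² / 2`, and `ṽ = (v ∘ g) / g'`. Since `∂̄g = 0`, the chain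
rule reads `∂(u ∘ g) = ((∂u) ∘ g) g'`, whence `∂ṽ = (∂v) ∘ g - η ṽ`. Differentiating this relation
twice and substituting it back gives
`∂³ṽ = ((∂³v) ∘ g) g'² - 2 S(g) ((∂v) ∘ g) + (3 η η' - η'' - η³) ṽ`,
which is exactly `D_{S(g)} ṽ = ((∂³v) ∘ g) g'²`. The remaining part of `D_{h̃} ṽ` is of first order:
with `q̃ = (h ∘ g) g'²`, the two terms `± 2 q̃ η ṽ` of `2 q̃ ∂ṽ + (∂q̃) ṽ` cancel.
-/

open Complex MeasureTheory

/-- The Wirtinger derivative ∂u = (u_x − i·u_y)/2 of a function `u : ℂ → ℂ`. -/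
noncomputable def wd (u : ℂ → ℂ) : ℂ → ℂ :=
  fun z => (fderiv ℝ u z 1 - Complex.I * fderiv ℝ u z Complex.I) / 2

/-- The conjugate Wirtinger derivative ∂̄u = (u_x + i·u_y)/2. -/
noncomputable def wdbar (u : ℂ → ℂ) : ℂ → ℂ :=
  fun z => (fderiv ℝ u z 1 + Complex.I * fderiv ℝ u z Complex.I) / 2

/-- The Schwarzian derivative {f,z} = ∂³f/∂f − (3/2)·(∂²f/∂f)² of a smooth map. -/
noncomputable def schwarz (f : ℂ → ℂ) : ℂ → ℂ :=
  fun z => wd (wd (wd f)) z / wd f z - (3/2) * (wd (wd f) z / wd f z)^2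

/-- The Schwarzian derivative S(g) = g'''/g' − (3/2)·(g''/g')² of a holomorphic map. -/
noncomputable def schwarzD (g : ℂ → ℂ) : ℂ → ℂ :=
  fun z => deriv (deriv (deriv g)) z / deriv g z - (3/2) * (deriv (deriv g) z / deriv g z)^2

/-- The operator ∂̄_μ^{(k)} u = ∂̄u − μ·∂u − k·(∂μ)·u. -/
noncomputable def dbarMu (μ : ℂ → ℂ) (k : ℤ) (u : ℂ → ℂ) : ℂ → ℂ :=
  fun z => wdbar u z - μ z * wd u z - (k : ℂ) * wd μ z * u z

/-- The third-order operator D_h u = ∂³u + 2h·∂u + (∂h)·u. -/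
noncomputable def Dop (h u : ℂ → ℂ) : ℂ → ℂ :=
  fun z => wd (wd (wd u)) z + 2 * h z * wd u z + wd h z * u z

/-- The Lie derivative on weight-2 quantities: L_v q = v·∂q + 2·(∂v)·q. -/
noncomputable def lieD (v q : ℂ → ℂ) : ℂ → ℂ :=
  fun z => v z * wd q z + 2 * wd v z * q z

open Filter Topology ComplexConjugate

lemma fderiv_apply_eq_wd_add_wdbar (u : ℂ → ℂ) (z w : ℂ) :
    fderiv ℝ u z w = wd u z * w + wdbar u z * conj w := by
  have hw : w = w.re • (1 : ℂ) + w.im • I := by simp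
  have hlin : fderiv ℝ u z w = w.re * fderiv ℝ u z 1 + w.im * fderiv ℝ u z I := by
    conv_lhs => rw [hw, map_add, map_smul, map_smul]
    simp only [real_smul]
  have hconj : conj w = w.re - w.im * I := by
    apply Complex.ext <;> simp
  rw [hlin, hconj, wd, wdbar]
  linear_combination (fderiv ℝ u z 1 - I * fderiv ℝ u z I) / 2 * re_add_im w +
    w.im * fderiv ℝ u z I * I_mul_I

lemma contDiffAt_wd {u : ℂ → ℂ} {z : ℂ} {m n : WithTop ℕ∞} (hu : ContDiffAt ℝ n u z)
    (hmn : m + 1 ≤ n) :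
    ContDiffAt ℝ m (wd u) z := by
  have hfderiv : ContDiffAt ℝ m (fderiv ℝ u) z := hu.fderiv_right hmn
  exact ((hfderiv.clm_apply contDiffAt_const).sub
    (contDiffAt_const.mul (hfderiv.clm_apply contDiffAt_const))).div_const 2

/-- `u` is real differentiable at `z` with Wirtinger derivative `∂u(z) = a`: the analogue of
`HasDerivAt` for `wd`. Differentiability is part of the notion because `fderiv`, and with it `wd`,
is `0` where `u` is not differentiable. -/
def HasWDerivAt (u : ℂ → ℂ) (a z : ℂ) : Prop :=
  DifferentiableAt ℝ u z ∧ wd u z = a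

lemma hasWDerivAt_wd {u : ℂ → ℂ} {z : ℂ} (hu : DifferentiableAt ℝ u z) :
    HasWDerivAt u (wd u z) z :=
  ⟨hu, rfl⟩

namespace HasWDerivAt

variable {u w g : ℂ → ℂ} {a b z : ℂ}

lemma wd_eq (hu : HasWDerivAt u a z) : wd u z = a := hu.2

lemma of_hasDerivAt (hu : HasDerivAt u a z) : HasWDerivAt u a z := by
  have hfderiv := hu.hasFDerivAt.restrictScalars ℝ
  refine ⟨hfderiv.differentiableAt, ?_⟩
  simp only [wd, hfderiv.fderiv, ContinuousLinearMap.coe_restrictScalars',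
    ContinuousLinearMap.toSpanSingleton_apply, smul_eq_mul]
  linear_combination (-a / 2) * I_mul_I

lemma congr_wderiv (hu : HasWDerivAt u a z) (hab : a = b) : HasWDerivAt u b z :=
  hab ▸ hu

lemma congr_of_eventuallyEq (hu : HasWDerivAt u a z) (hwu : w =ᶠ[𝓝 z] u) : HasWDerivAt w a z :=
  ⟨hu.1.congr_of_eventuallyEq hwu, by rw [← hu.wd_eq, wd, wd, hwu.fderiv_eq]⟩

lemma add (hu : HasWDerivAt u a z) (hw : HasWDerivAt w b z) :
    HasWDerivAt (fun x => u x + w x) (a + b) z := by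
  refine ⟨hu.1.fun_add hw.1, ?_⟩
  rw [← hu.wd_eq, ← hw.wd_eq]
  simp only [wd, fderiv_fun_add hu.1 hw.1, add_apply]
  ring

lemma mul (hu : HasWDerivAt u a z) (hw : HasWDerivAt w b z) :
    HasWDerivAt (fun x => u x * w x) (a * w z + u z * b) z := by
  refine ⟨hu.1.fun_mul hw.1, ?_⟩
  rw [← hu.wd_eq, ← hw.wd_eq]
  simp only [wd, fderiv_fun_mul hu.1 hw.1, add_apply, smul_apply, smul_eq_mul]
  ring

lemma comp_hasDerivAt (hu : HasWDerivAt u a (g z)) (hg : HasDerivAt g b z) :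
    HasWDerivAt (fun x => u (g x)) (a * b) z := by
  have hcomp := hu.1.hasFDerivAt.comp z (hg.hasFDerivAt.restrictScalars ℝ)
  refine ⟨hcomp.differentiableAt, ?_⟩
  have hfderiv (t : ℂ) : fderiv ℝ (fun x => u (g x)) z t = fderiv ℝ u (g z) (t * b) :=
    congrArg (· t) hcomp.fderiv
  -- The `∂̄u` contributions of the directions `1` and `I` cancel because `g` is holomorphic.
  rw [wd, hfderiv, hfderiv, fderiv_apply_eq_wd_add_wdbar, fderiv_apply_eq_wd_add_wdbar, hu.wd_eq]
  simp only [map_mul, map_one, conj_I]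
  linear_combination (wdbar u (g z) * conj b - a * b) / 2 * I_mul_I

end HasWDerivAt

lemma Dop_add_apply {h₁ h₂ : ℂ → ℂ} {z : ℂ} (hh₁ : DifferentiableAt ℝ h₁ z)
    (hh₂ : DifferentiableAt ℝ h₂ z) (u : ℂ → ℂ) :
    Dop (fun x => h₁ x + h₂ x) u z = 2 * h₁ z * wd u z + wd h₁ z * u z + Dop h₂ u z := by
  have hadd : wd (fun x => h₁ x + h₂ x) z = wd h₁ z + wd h₂ z :=
    ((hasWDerivAt_wd hh₁).add (hasWDerivAt_wd hh₂)).wd_eq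
  rw [Dop, Dop, hadd]
  ring

/-- The pre-Schwarzian derivative `η = g'' / g'` of a holomorphic map `g`, in terms of which all
transformation formulas below are polynomial. -/
noncomputable def preschwarzD (g : ℂ → ℂ) : ℂ → ℂ :=
  logDeriv (deriv g)

/-- The pullback `ṽ = (v ∘ g) / g'` of the coefficient `v` of the vector field `v ∂` along the
holomorphic map `g`. -/
noncomputable def vectorFieldPullback (g v : ℂ → ℂ) : ℂ → ℂ :=
  fun z => v (g z) / deriv g z

section ConformalMap

variable {g h v : ℂ → ℂ} {z : ℂ}

lemma eventually_analyticAt_and_deriv_ne_zero (hg : AnalyticAt ℂ g z) (hg' : deriv g z ≠ 0) :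
    ∀ᶠ x in 𝓝 z, AnalyticAt ℂ g x ∧ deriv g x ≠ 0 :=
  hg.eventually_analyticAt.and (hg.deriv.continuousAt.eventually_ne hg')

lemma analyticAt_preschwarzD (hg : AnalyticAt ℂ g z) (hg' : deriv g z ≠ 0) :
    AnalyticAt ℂ (preschwarzD g) z :=
  hg.deriv.deriv.div hg.deriv hg'

lemma hasDerivAt_deriv_preschwarzD (hg : AnalyticAt ℂ g z) (hg' : deriv g z ≠ 0) :
    HasDerivAt (deriv g) (preschwarzD g z * deriv g z) z := by
  rw [preschwarzD, logDeriv_apply, div_mul_cancel₀ _ hg']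
  exact hg.deriv.differentiableAt.hasDerivAt

lemma schwarzD_eq_deriv_preschwarzD (hg : AnalyticAt ℂ g z) (hg' : deriv g z ≠ 0) :
    schwarzD g z = deriv (preschwarzD g) z - preschwarzD g z ^ 2 / 2 := by
  have hderiv : deriv (preschwarzD g) z =
      (deriv (deriv (deriv g)) z * deriv g z - deriv (deriv g) z * deriv (deriv g) z) /
        deriv g z ^ 2 :=
    deriv_div hg.deriv.deriv.differentiableAt hg.deriv.differentiableAt hg'
  rw [schwarzD, hderiv, preschwarzD, logDeriv_apply]
  field_simp
  ring

lemma hasDerivAt_schwarzD (hg : AnalyticAt ℂ g z) (hg' : deriv g z ≠ 0) :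
    HasDerivAt (schwarzD g)
      (deriv (deriv (preschwarzD g)) z - preschwarzD g z * deriv (preschwarzD g) z) z := by
  have hη := analyticAt_preschwarzD hg hg'
  have hderiv := hη.deriv.differentiableAt.hasDerivAt.fun_sub
    ((hη.differentiableAt.hasDerivAt.fun_pow 2).div_const 2)
  have heq : schwarzD g =ᶠ[𝓝 z] fun x => deriv (preschwarzD g) x - preschwarzD g x ^ 2 / 2 := by
    filter_upwards [eventually_analyticAt_and_deriv_ne_zero hg hg'] with x ⟨hgx, hgx'⟩
    exact schwarzD_eq_deriv_preschwarzD hgx hgx'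
  refine (hderiv.congr_of_eventuallyEq heq).congr_deriv ?_
  push_cast
  ring

lemma hasWDerivAt_vectorFieldPullback (hg : AnalyticAt ℂ g z) (hg' : deriv g z ≠ 0)
    (hv : DifferentiableAt ℝ v (g z)) :
    HasWDerivAt (vectorFieldPullback g v)
      (wd v (g z) - preschwarzD g z * vectorFieldPullback g v z) z := by
  have hvg := (hasWDerivAt_wd hv).comp_hasDerivAt hg.differentiableAt.hasDerivAt
  have hinv := HasWDerivAt.of_hasDerivAt ((hasDerivAt_deriv_preschwarzD hg hg').fun_inv hg')
  have heq : vectorFieldPullback g v = fun x => v (g x) * (deriv g x)⁻¹ :=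
    funext fun x => div_eq_mul_inv _ _
  rw [heq]
  refine (hvg.mul hinv).congr_wderiv ?_
  field_simp
  ring

lemma hasWDerivAt_wd_vectorFieldPullback (hg : AnalyticAt ℂ g z) (hg' : deriv g z ≠ 0)
    (hv : ContDiffAt ℝ 2 v (g z)) :
    HasWDerivAt (wd (vectorFieldPullback g v))
      (wd (wd v) (g z) * deriv g z - preschwarzD g z * wd v (g z) +
        (preschwarzD g z ^ 2 - deriv (preschwarzD g) z) * vectorFieldPullback g v z) z := by
  have heq : wd (vectorFieldPullback g v) =ᶠ[𝓝 z]
      fun x => wd v (g x) + -preschwarzD g x * vectorFieldPullback g v x := by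
    filter_upwards [eventually_analyticAt_and_deriv_ne_zero hg hg',
      hg.continuousAt.eventually (hv.eventually (by simp))] with x ⟨hgx, hgx'⟩ hvx
    rw [(hasWDerivAt_vectorFieldPullback hgx hgx' (hvx.differentiableAt (by simp))).wd_eq]
    ring
  have hv₁ := (hasWDerivAt_wd ((contDiffAt_wd hv one_add_one_eq_two.le).differentiableAt
    (by simp))).comp_hasDerivAt hg.differentiableAt.hasDerivAt
  have hη := HasWDerivAt.of_hasDerivAt
    (analyticAt_preschwarzD hg hg').differentiableAt.hasDerivAt.fun_neg
  have hpull := hasWDerivAt_vectorFieldPullback hg hg' (hv.differentiableAt (by simp))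
  refine ((hv₁.add (hη.mul hpull)).congr_of_eventuallyEq heq).congr_wderiv ?_
  ring

lemma wd_wd_wd_vectorFieldPullback (hg : AnalyticAt ℂ g z) (hg' : deriv g z ≠ 0)
    (hv : ContDiffAt ℝ 3 v (g z)) :
    wd (wd (wd (vectorFieldPullback g v))) z =
      wd (wd (wd v)) (g z) * deriv g z ^ 2 - 2 * schwarzD g z * wd v (g z) +
        (3 * preschwarzD g z * deriv (preschwarzD g) z - deriv (deriv (preschwarzD g)) z -
          preschwarzD g z ^ 3) * vectorFieldPullback g v z := by
  have hv₁ : ContDiffAt ℝ 2 (wd v) (g z) := contDiffAt_wd hv two_add_one_eq_three.le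
  have hv₂ : ContDiffAt ℝ 1 (wd (wd v)) (g z) := contDiffAt_wd hv₁ one_add_one_eq_two.le
  have heq : wd (wd (vectorFieldPullback g v)) =ᶠ[𝓝 z] fun x =>
      wd (wd v) (g x) * deriv g x + -preschwarzD g x * wd v (g x) +
        (preschwarzD g x ^ 2 - deriv (preschwarzD g) x) * vectorFieldPullback g v x := by
    filter_upwards [eventually_analyticAt_and_deriv_ne_zero hg hg',
      hg.continuousAt.eventually (hv.eventually (by simp))] with x ⟨hgx, hgx'⟩ hvx
    rw [(hasWDerivAt_wd_vectorFieldPullback hgx hgx' (hvx.of_le (by norm_num))).wd_eq]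
    ring
  have hgz := hg.differentiableAt.hasDerivAt
  have hηa := analyticAt_preschwarzD hg hg'
  have hη := hηa.differentiableAt.hasDerivAt
  have hcoeff := (hη.fun_pow 2).fun_sub hηa.deriv.differentiableAt.hasDerivAt
  have hterm₂ := ((hasWDerivAt_wd (hv₂.differentiableAt (by simp))).comp_hasDerivAt hgz).mul
    (.of_hasDerivAt (hasDerivAt_deriv_preschwarzD hg hg'))
  have hterm₁ := (HasWDerivAt.of_hasDerivAt hη.fun_neg).mul
    ((hasWDerivAt_wd (hv₁.differentiableAt (by simp))).comp_hasDerivAt hgz)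
  have hterm₀ := (HasWDerivAt.of_hasDerivAt hcoeff).mul
    (hasWDerivAt_vectorFieldPullback hg hg' (hv.differentiableAt (by simp)))
  rw [(((hterm₂.add hterm₁).add hterm₀).congr_of_eventuallyEq heq).wd_eq,
    schwarzD_eq_deriv_preschwarzD hg hg']
  push_cast
  ring

lemma Dop_schwarzD_vectorFieldPullback (hg : AnalyticAt ℂ g z) (hg' : deriv g z ≠ 0)
    (hv : ContDiffAt ℝ 3 v (g z)) :
    Dop (schwarzD g) (vectorFieldPullback g v) z = wd (wd (wd v)) (g z) * deriv g z ^ 2 := by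
  rw [Dop, wd_wd_wd_vectorFieldPullback hg hg' hv,
    (hasWDerivAt_vectorFieldPullback hg hg' (hv.differentiableAt (by simp))).wd_eq,
    (HasWDerivAt.of_hasDerivAt (hasDerivAt_schwarzD hg hg')).wd_eq,
    schwarzD_eq_deriv_preschwarzD hg hg']
  ring

lemma hasWDerivAt_comp_mul_deriv_sq (hg : AnalyticAt ℂ g z) (hg' : deriv g z ≠ 0)
    (hh : DifferentiableAt ℝ h (g z)) :
    HasWDerivAt (fun x => h (g x) * deriv g x ^ 2)
      ((wd h (g z) * deriv g z + 2 * preschwarzD g z * h (g z)) * deriv g z ^ 2) z := by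
  have hhg := (hasWDerivAt_wd hh).comp_hasDerivAt hg.differentiableAt.hasDerivAt
  have hsq := HasWDerivAt.of_hasDerivAt ((hasDerivAt_deriv_preschwarzD hg hg').fun_pow 2)
  refine (hhg.mul hsq).congr_wderiv ?_
  push_cast
  ring

lemma two_mul_wd_add_wd_mul_vectorFieldPullback (hg : AnalyticAt ℂ g z) (hg' : deriv g z ≠ 0)
    (hh : DifferentiableAt ℝ h (g z)) (hv : DifferentiableAt ℝ v (g z)) :
    2 * (h (g z) * deriv g z ^ 2) * wd (vectorFieldPullback g v) z +
        wd (fun x => h (g x) * deriv g x ^ 2) z * vectorFieldPullback g v z =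
      (2 * h (g z) * wd v (g z) + wd h (g z) * v (g z)) * deriv g z ^ 2 := by
  have hcancel : deriv g z * vectorFieldPullback g v z = v (g z) := mul_div_cancel₀ _ hg'
  rw [(hasWDerivAt_vectorFieldPullback hg hg' hv).wd_eq,
    (hasWDerivAt_comp_mul_deriv_sq hg hg' hh).wd_eq]
  linear_combination wd h (g z) * deriv g z ^ 2 * hcancel

end ConformalMap

theorem stmt7_general {g h v : ℂ → ℂ} {z : ℂ} (hg : AnalyticAt ℂ g z) (hg' : deriv g z ≠ 0)
    (hh : DifferentiableAt ℝ h (g z)) (hv : ContDiffAt ℝ 3 v (g z)) :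
    Dop (fun x => h (g x) * deriv g x ^ 2 + schwarzD g x) (fun x => v (g x) / deriv g x) z =
      Dop h v (g z) * deriv g z ^ 2 := by
  have hh₁ := (hasWDerivAt_comp_mul_deriv_sq hg hg' hh).1
  have hS := (HasWDerivAt.of_hasDerivAt (hasDerivAt_schwarzD hg hg')).1
  change Dop _ (vectorFieldPullback g v) z = _
  rw [Dop_add_apply hh₁ hS, Dop_schwarzD_vectorFieldPullback hg hg' hv,
    two_mul_wd_add_wd_mul_vectorFieldPullback hg hg' hh (hv.differentiableAt (by simp)), Dop]
  ring

/-- `D_h` maps vector-field coefficients to quadratic-differential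
coefficients compatibly with holomorphic coordinate changes, provided `h`
transforms as a projective connection: `D_{h̃} ṽ = ((D_h v)∘g)·(g')²`. -/
theorem stmt7 (U U' : Set ℂ) (hU : IsOpen U) (hU' : IsOpen U')
    (g : ℂ → ℂ) (hg : DifferentiableOn ℂ g U) (hmaps : Set.MapsTo g U U')
    (hg' : ∀ z ∈ U, deriv g z ≠ 0)
    (h v : ℂ → ℂ) (hh : ContDiffOn ℝ (⊤ : ℕ∞) h U') (hv : ContDiffOn ℝ (⊤ : ℕ∞) v U') :
    ∀ z ∈ U,
      Dop (fun x => h (g x) * (deriv g x)^2 + schwarzD g x)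
          (fun x => v (g x) / deriv g x) z
        = Dop h v (g z) * (deriv g z)^2 :=
  fun z hz => stmt7_general (hg.analyticAt (hU.mem_nhds hz)) (hg' z hz)
    ((hh.contDiffAt (hU'.mem_nhds (hmaps hz))).differentiableAt (by simp))
    ((hv.contDiffAt (hU'.mem_nhds (hmaps hz))).of_le ENat.LEInfty.out)
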